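/- Let d ≥ 2 be any integer and set n = d − 1. Let t = (t_{ij}) and s = (s_{ij}) be families of real numbers indexed by pairs 1 ≤ i ≤ n, 1 ≤ j ≤ n+1−i, with all t_{ij} > 0 and all s_{ij} > 0, and let u(t), u(s) ∈ U_d be the corresponding products u(t) = B_n ⋯ B_1 with B_m = ∏_{i=1}^m (I + t_{i,m+1−i} E_{i,i+1}) (factors in order of increasing i). Then u(t) and u(s) lie in S_d, they lie in the same connected component of S_d, and u(t)⁻¹ does not lie in the connected component of S_d containing u(s). (That is, for every d ≥ 2, the inversion map does not preserve the connected component of S_d consisting of totally positive unipotent matrices.) -/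

import Mathlib

/-- `u` is upper triangular with all diagonal entries equal to `1`. -/
def IsUniUpper (d : ℕ) (u : Matrix (Fin d) (Fin d) ℝ) : Prop :=
  (∀ i j : Fin d, (j : ℕ) < (i : ℕ) → u i j = 0) ∧ (∀ i : Fin d, u i i = 1)

/-- `p_k(u)`: the determinant of the upper-right `k × k` block of `u`
(rows `1,…,k` and columns `d−k+1,…,d`, in one-based indexing). -/
noncomputable def cornerMinor (d k : ℕ) (u : Matrix (Fin d) (Fin d) ℝ) : ℝ :=
  Matrix.det (Matrix.of fun i j : Fin k =>
    if h : (i : ℕ) < d ∧ d - k + (j : ℕ) < d then u ⟨i, h.1⟩ ⟨d - k + j, h.2⟩ else 0)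

/-- `S_d = {u ∈ U_d : p_k(u) ≠ 0 for all 1 ≤ k ≤ d−1}`. -/
def Sset (d : ℕ) : Set (Matrix (Fin d) (Fin d) ℝ) :=
  {u | IsUniUpper d u ∧ ∀ k : ℕ, 1 ≤ k → k ≤ d - 1 → cornerMinor d k u ≠ 0}

/-- `E_{i,i+1}`: the `d×d` matrix whose only nonzero entry is a `1` in
position `(i, i+1)` (one-based indexing). -/
def elemE (d i : ℕ) : Matrix (Fin d) (Fin d) ℝ :=
  Matrix.of fun a b => if (a : ℕ) + 1 = i ∧ (b : ℕ) = i then 1 else 0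

/-- The block `B_m = ∏_{i=1}^{m} (I + t_{i,m+1−i} E_{i,i+1})`, factors in order of
increasing `i`. -/
def blockB (n : ℕ) (t : ℕ → ℕ → ℝ) (m : ℕ) : Matrix (Fin (n + 1)) (Fin (n + 1)) ℝ :=
  ((List.range m).map (fun i' => (1 : Matrix (Fin (n + 1)) (Fin (n + 1)) ℝ)
      + t (i' + 1) (m - i') • elemE (n + 1) (i' + 1))).prod

/-- `u(t) = B_n · B_{n−1} ⋯ B_1`. -/
def uProd (n : ℕ) (t : ℕ → ℕ → ℝ) : Matrix (Fin (n + 1)) (Fin (n + 1)) ℝ :=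
  ((List.range n).map (fun m' => blockB n t (n - m'))).prod

/-! Let `c` be the last column of a unipotent upper triangular matrix `u`. If `c` has no zero entry,
subtracting `c i / c (i + 1)` times row `i + 1` from row `i` clears it above the diagonal, and
deleting the last row and column leaves a smaller unipotent matrix `peel u`. Every corner minor of
`u` is a corner minor of `peel u` times an entry of `c`. The block `B_n` is inverse to such a row
operation, so peeling `u(t)` returns the product of size one less, and positivity of `t` becomes
positivity of the last columns of all successive peelings.

This positivity is an open condition. It is also closed within `S_d`: it makes the entries of `u`
nonnegative, and `c i ≤ u i (i + 1) * c (i + 1)` persists in the limit, so a zero in the last column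
would propagate upwards to `p_1(u) = c 0`. Hence it holds on the whole component of `u(s)`. If it
held for both `u` and `u⁻¹`, these would be nonnegative matrices whose product has a positive
upper-right entry, whereas the identity has a zero there. -/

lemma mul_apply_pos {R l m n : Type*} [Semiring R] [PartialOrder R] [IsStrictOrderedRing R]
    [Fintype m] {A : Matrix l m R} {B : Matrix m n R} {i : l} {j : n} (hA : ∀ k, 0 ≤ A i k)
    (hB : ∀ k, 0 ≤ B k j) {k : m} (hik : 0 < A i k) (hkj : 0 < B k j) : 0 < (A * B) i j :=
  Finset.sum_pos' (fun k _ => mul_nonneg (hA k) (hB k)) ⟨k, Finset.mem_univ k, mul_pos hik hkj⟩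

lemma subset_of_isPreconnected_of_closure_inter_subset {X : Type*} [TopologicalSpace X]
    {C O : Set X} (hC : IsPreconnected C) (hO : IsOpen O) (hne : (C ∩ O).Nonempty)
    (hcl : closure (C ∩ O) ∩ C ⊆ O) : C ⊆ O := by
  have hcover : C ⊆ O ∪ (closure (C ∩ O))ᶜ := fun x hx =>
    (em (x ∈ closure (C ∩ O))).imp (fun h => hcl ⟨h, hx⟩) id
  by_contra hsub
  obtain ⟨x, hxC, hxO⟩ := Set.not_subset.1 hsub
  obtain ⟨y, hyC, hyO, hy⟩ := hC O _ hO isClosed_closure.isOpen_compl hcover hne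
    ⟨x, hxC, (hcover hxC).resolve_left hxO⟩
  exact hy (subset_closure ⟨hyC, hyO⟩)

lemma mul_prod_one_add_of_mul_eq_zero {R ι : Type*} [Semiring R] (x : R) (e : ι → R) (l : List ι)
    (h : ∀ i ∈ l, x * e i = 0) : x * (l.map fun i => 1 + e i).prod = x := by
  induction l with
  | nil => simp
  | cons i l ih =>
    rw [List.forall_mem_cons] at h
    rw [List.map_cons, List.prod_cons, ← mul_assoc, mul_add, mul_one, h.1, add_zero, ih h.2]

lemma one_sub_sum_mul_prod_one_add {R : Type*} [Ring R] (e : ℕ → R)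
    (h : ∀ i j, j ≤ i → e i * e j = 0) (r : ℕ) :
    (1 - ∑ l ∈ Finset.range r, e l) * ((List.range r).map fun l => 1 + e l).prod = 1 := by
  induction r with
  | zero => simp
  | succ r ih =>
    have hr : e r * ((List.range r).map fun l => 1 + e l).prod = e r :=
      mul_prod_one_add_of_mul_eq_zero _ _ _ fun l hl => h _ _ (List.mem_range.1 hl).le
    rw [List.range_succ, List.map_append, List.prod_append, List.map_singleton,
      List.prod_singleton, Finset.sum_range_succ, ← sub_sub, sub_mul, ← mul_assoc, ih,
      ← mul_assoc, hr, one_mul, mul_add, mul_one, h r r le_rfl, add_zero, add_sub_cancel_right]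

section Superdiagonal

variable {R ι : Type*} {m : ℕ}

/-- The matrix with entries `c` on the first superdiagonal and zeros elsewhere. Multiplying by
`1 - superdiag c` on the left performs the row operations `row i - c i • row (i + 1)`. -/
def superdiag [Zero R] (c : Fin m → R) : Matrix (Fin (m + 1)) (Fin (m + 1)) R :=
  Matrix.of fun i j => Fin.lastCases 0 (fun i' => if j = i'.succ then c i' else 0) i

@[simp]
lemma superdiag_castSucc [Zero R] (c : Fin m → R) (i : Fin m) (j : Fin (m + 1)) :
    superdiag c i.castSucc j = if j = i.succ then c i else 0 := by
  simp [superdiag]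

@[simp]
lemma superdiag_last [Zero R] (c : Fin m → R) (j : Fin (m + 1)) :
    superdiag c (Fin.last m) j = 0 := by
  simp [superdiag]

lemma superdiag_apply_eq_zero [Zero R] (c : Fin m → R) {i j : Fin (m + 1)} (h : j ≤ i) :
    superdiag c i j = 0 := by
  cases i using Fin.lastCases with
  | last => exact superdiag_last c j
  | cast i => rw [superdiag_castSucc, if_neg (h.trans_lt i.castSucc_lt_succ).ne]

lemma one_sub_superdiag_mul_castSucc [Ring R] (c : Fin m → R)
    (A : Matrix (Fin (m + 1)) ι R) (i : Fin m) (j : ι) :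
    ((1 - superdiag c) * A : Matrix _ ι R) i.castSucc j = A i.castSucc j - c i * A i.succ j := by
  rw [Matrix.sub_mul, Matrix.one_mul, Matrix.sub_apply, Matrix.mul_apply]
  simp

lemma one_sub_superdiag_mul_last [Ring R] (c : Fin m → R)
    (A : Matrix (Fin (m + 1)) ι R) (j : ι) :
    ((1 - superdiag c) * A : Matrix _ ι R) (Fin.last m) j = A (Fin.last m) j := by
  rw [Matrix.sub_mul, Matrix.one_mul, Matrix.sub_apply, Matrix.mul_apply]
  simp

lemma det_one_sub_superdiag [CommRing R] (c : Fin m → R) : (1 - superdiag c).det = 1 := by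
  have hupper : (1 - superdiag c).IsUpperTriangular := fun i j (hij : j < i) => by
    rw [Matrix.sub_apply, Matrix.one_apply_ne hij.ne', superdiag_apply_eq_zero c hij.le, sub_zero]
  rw [Matrix.det_of_isUpperTriangular hupper]
  simp [superdiag_apply_eq_zero]

lemma castSucc_last_of_one_sub_superdiag_mul_eq_one [Ring R] {c : Fin m → R}
    {B : Matrix (Fin (m + 1)) (Fin (m + 1)) R} (hB : (1 - superdiag c) * B = 1) (i : Fin m) :
    B i.castSucc (Fin.last m) = c i * B i.succ (Fin.last m) := by
  rw [← sub_eq_zero, ← one_sub_superdiag_mul_castSucc, hB,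
    Matrix.one_apply_ne (Fin.castSucc_lt_last i).ne]

lemma last_col_pos_of_one_sub_superdiag_mul_eq_one [Ring R] [PartialOrder R]
    [IsStrictOrderedRing R] {c : Fin m → R} (hc : ∀ i, 0 < c i)
    {B : Matrix (Fin (m + 1)) (Fin (m + 1)) R} (hB : (1 - superdiag c) * B = 1)
    (i : Fin (m + 1)) : 0 < B i (Fin.last m) := by
  induction i using Fin.reverseInduction with
  | last =>
    rw [← one_sub_superdiag_mul_last c B, hB, Matrix.one_apply_eq]
    exact one_pos
  | cast i ih =>
    rw [castSucc_last_of_one_sub_superdiag_mul_eq_one hB]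
    exact mul_pos (hc i) ih

end Superdiagonal

section DiagOne

variable {R : Type*} {m : ℕ}

/-- The embedding `v ↦ diag(v, 1)` of `m × m` matrices into `(m + 1) × (m + 1)` matrices. -/
def diagOne [Semiring R] : Matrix (Fin m) (Fin m) R →* Matrix (Fin (m + 1)) (Fin (m + 1)) R where
  toFun v := Matrix.of fun i j =>
    Fin.lastCases (Fin.lastCases 1 (fun _ => 0) j)
      (fun i' => Fin.lastCases 0 (fun j' => v i' j') j) i
  map_one' := by
    ext i j
    cases i using Fin.lastCases <;> cases j using Fin.lastCases <;>
      simp [Matrix.one_apply, (Fin.castSucc_lt_last _).ne, (Fin.castSucc_lt_last _).ne']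
  map_mul' v w := by
    ext i j
    cases i using Fin.lastCases <;> cases j using Fin.lastCases <;>
      simp [Matrix.mul_apply, Fin.sum_univ_castSucc]

variable [Semiring R] (v : Matrix (Fin m) (Fin m) R)

@[simp]
lemma diagOne_castSucc_castSucc (i j : Fin m) : diagOne v i.castSucc j.castSucc = v i j := by
  simp [diagOne]

@[simp]
lemma diagOne_castSucc_last (i : Fin m) : diagOne v i.castSucc (Fin.last m) = 0 := by
  simp [diagOne]

@[simp]
lemma diagOne_last_castSucc (j : Fin m) : diagOne v (Fin.last m) j.castSucc = 0 := by
  simp [diagOne]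

@[simp]
lemma diagOne_last_last : diagOne v (Fin.last m) (Fin.last m) = 1 := by
  simp [diagOne]

lemma mul_diagOne_apply_last {ι : Type*} (B : Matrix ι (Fin (m + 1)) R) (i : ι) :
    (B * diagOne v) i (Fin.last m) = B i (Fin.last m) := by
  simp [Matrix.mul_apply, Fin.sum_univ_castSucc]

end DiagOne

section Peel

variable {K : Type*} [Field K] {m : ℕ}

/-- The quotients of consecutive entries of the last column of `u`, with the value `0` where the
denominator vanishes. -/
def lastColRatio (u : Matrix (Fin (m + 1)) (Fin (m + 1)) K) (i : Fin m) : K :=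
  u i.castSucc (Fin.last m) / u i.succ (Fin.last m)

/-- One step of Gaussian elimination from the right: clear the last column of `u` above its bottom
entry by subtracting from every row a multiple of the next one, then delete the last row and
column. -/
def peel (u : Matrix (Fin (m + 1)) (Fin (m + 1)) K) : Matrix (Fin m) (Fin m) K :=
  ((1 - superdiag (lastColRatio u)) * u).submatrix Fin.castSucc Fin.castSucc

lemma peel_apply (u : Matrix (Fin (m + 1)) (Fin (m + 1)) K) (i j : Fin m) :
    peel u i j = u i.castSucc j.castSucc - lastColRatio u i * u i.succ j.castSucc :=
  one_sub_superdiag_mul_castSucc _ _ _ _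

lemma det_eq_last_mul_det_peel (u : Matrix (Fin (m + 1)) (Fin (m + 1)) K)
    (hu : ∀ i : Fin m, u i.succ (Fin.last m) ≠ 0) :
    u.det = u (Fin.last m) (Fin.last m) * (peel u).det := by
  set A := (1 - superdiag (lastColRatio u)) * u with hA
  have hdet : A.det = u.det := by rw [hA, Matrix.det_mul, det_one_sub_superdiag, one_mul]
  have hcol (i : Fin m) : A i.castSucc (Fin.last m) = 0 := by
    rw [hA, one_sub_superdiag_mul_castSucc, lastColRatio, div_mul_cancel₀ _ (hu i), sub_self]
  have hlast : A (Fin.last m) (Fin.last m) = u (Fin.last m) (Fin.last m) :=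
    one_sub_superdiag_mul_last _ _ _
  rw [← hdet, Matrix.det_succ_column A (Fin.last m), Fin.sum_univ_castSucc]
  simp [hcol, hlast, peel, ← hA, ← two_mul]

lemma peel_mul_diagOne {c : Fin m → K} {B : Matrix (Fin (m + 1)) (Fin (m + 1)) K}
    (hB : (1 - superdiag c) * B = 1) (hlast : ∀ i : Fin m, B i.succ (Fin.last m) ≠ 0)
    (v : Matrix (Fin m) (Fin m) K) : peel (B * diagOne v) = v := by
  have hratio : lastColRatio (B * diagOne v) = c := by
    ext i
    rw [lastColRatio, mul_diagOne_apply_last, mul_diagOne_apply_last,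
      castSucc_last_of_one_sub_superdiag_mul_eq_one hB, mul_div_cancel_right₀ _ (hlast i)]
  ext i j
  rw [peel, hratio, ← mul_assoc, hB, one_mul, Matrix.submatrix_apply, diagOne_castSucc_castSucc]

end Peel

namespace IsUniUpper

variable {d : ℕ} {u v : Matrix (Fin d) (Fin d) ℝ}

lemma isUpperTriangular (hu : IsUniUpper d u) : u.IsUpperTriangular :=
  fun i j hij => hu.1 i j hij

lemma det_eq_one (hu : IsUniUpper d u) : u.det = 1 := by
  rw [Matrix.det_of_isUpperTriangular hu.isUpperTriangular]
  simp [hu.2]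

lemma mul_inv_eq_one (hu : IsUniUpper d u) : u * u⁻¹ = 1 :=
  Matrix.mul_nonsing_inv u (hu.det_eq_one ▸ isUnit_one)

protected lemma mul (hu : IsUniUpper d u) (hv : IsUniUpper d v) : IsUniUpper d (u * v) := by
  refine ⟨fun i j hij => hu.isUpperTriangular.mul hv.isUpperTriangular hij, fun i => ?_⟩
  rw [Matrix.mul_apply, Finset.sum_eq_single i _ (by simp), hu.2, hv.2, mul_one]
  intro k _ hk
  rcases hk.lt_or_gt with h | h
  · rw [hu.1 i k h, zero_mul]
  · rw [hv.1 k i h, mul_zero]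

protected lemma peel {m : ℕ} {u : Matrix (Fin (m + 1)) (Fin (m + 1)) ℝ}
    (hu : IsUniUpper (m + 1) u) : IsUniUpper m (peel u) := by
  refine ⟨fun i j hij => ?_, fun i => ?_⟩
  · rw [peel_apply, hu.1 i.castSucc j.castSucc hij,
      hu.1 i.succ j.castSucc (hij.trans (Nat.lt_succ_self i)), mul_zero, sub_zero]
  · rw [peel_apply, hu.2, hu.1 i.succ i.castSucc (Nat.lt_succ_self i), mul_zero, sub_zero]

end IsUniUpper

/-- The upper triangular matrices with unit diagonal as a submonoid of all matrices, so that
membership of the products defining `uProd` reduces to membership of the factors. -/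
def uniUpperSubmonoid (d : ℕ) : Submonoid (Matrix (Fin d) (Fin d) ℝ) where
  carrier := {u | IsUniUpper d u}
  one_mem' := ⟨fun _ _ hij => Matrix.one_apply_ne (Fin.ne_of_gt hij),
    fun _ => Matrix.one_apply_eq _⟩
  mul_mem' := IsUniUpper.mul

section CornerMinor

variable {m k : ℕ}

lemma cornerMinor_eq_det_submatrix (hk : k ≤ m) (u : Matrix (Fin m) (Fin m) ℝ) :
    cornerMinor m k u =
      (u.submatrix (Fin.castLE hk) fun j : Fin k => (j.rev.castLE hk).rev).det := by
  rw [cornerMinor]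
  congr 1
  ext i j
  rw [Matrix.of_apply, dif_pos (by omega), Matrix.submatrix_apply]
  congr 1
  ext
  simp only [Fin.val_rev, Fin.val_castLE]
  omega

lemma cornerMinor_one (u : Matrix (Fin (m + 1)) (Fin (m + 1)) ℝ) :
    cornerMinor (m + 1) 1 u = u 0 (Fin.last m) := by
  rw [cornerMinor_eq_det_submatrix (by omega), Matrix.det_fin_one]
  simp

lemma cornerMinor_succ (hk : k ≤ m) {u : Matrix (Fin (m + 1)) (Fin (m + 1)) ℝ}
    (hu : ∀ i, u i (Fin.last m) ≠ 0) :
    cornerMinor (m + 1) (k + 1) u =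
      u ⟨k, Nat.lt_succ_of_le hk⟩ (Fin.last m) * cornerMinor m k (peel u) := by
  rw [cornerMinor_eq_det_submatrix (Nat.succ_le_succ hk), cornerMinor_eq_det_submatrix hk,
    det_eq_last_mul_det_peel _ (by simp [hu])]
  congr 2
  · rw [Matrix.submatrix_apply, Fin.rev_last, Fin.castLE_zero, Fin.rev_zero]
    rfl
  · ext i j
    simp [peel_apply, lastColRatio, Fin.rev_castSucc, Fin.rev_succ]

end CornerMinor

section Positivity

/-- The matrices whose last column is positive. -/
def lastColPos (m : ℕ) : Set (Matrix (Fin (m + 1)) (Fin (m + 1)) ℝ) :=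
  {u | ∀ i, 0 < u i (Fin.last m)}

/-- The matrices all of whose successive peelings have a positive last column. Among unipotent
upper triangular matrices these are the totally positive ones; unipotency is left out of the
definition so that the set is open in the space of all matrices. -/
def peelPos : (d : ℕ) → Set (Matrix (Fin d) (Fin d) ℝ)
  | 0 => Set.univ
  | m + 1 => lastColPos m ∩ Set.preimage peel (peelPos m)

variable {m d : ℕ}

lemma isOpen_lastColPos (m : ℕ) : IsOpen (lastColPos m) := by
  rw [lastColPos, Set.ofPred_forall]
  exact isOpen_iInter_of_finite fun i =>
    isOpen_lt continuous_const (continuous_id.matrix_elem i (Fin.last m))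

lemma continuousOn_peel_lastColPos (m : ℕ) :
    ContinuousOn (peel : Matrix (Fin (m + 1)) (Fin (m + 1)) ℝ → _) (lastColPos m) := by
  have hentry (i j : Fin (m + 1)) :
      ContinuousOn (fun u : Matrix (Fin (m + 1)) (Fin (m + 1)) ℝ => u i j) (lastColPos m) :=
    (continuous_id.matrix_elem i j).continuousOn
  refine continuousOn_pi.2 fun i => continuousOn_pi.2 fun j => ?_
  simp only [peel_apply, lastColRatio]
  exact (hentry _ _).sub
    (((hentry _ _).div (hentry _ _) fun u hu => (hu i.succ).ne').mul (hentry _ _))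

lemma isOpen_peelPos (d : ℕ) : IsOpen (peelPos d) := by
  induction d with
  | zero => exact isOpen_univ
  | succ m ih =>
    exact (continuousOn_peel_lastColPos m).isOpen_inter_preimage (isOpen_lastColPos m) ih

lemma cornerMinor_pos_of_mem_peelPos {u : Matrix (Fin d) (Fin d) ℝ} (hu : u ∈ peelPos d) {k : ℕ}
    (hk : k ≤ d) : 0 < cornerMinor d k u := by
  induction d generalizing k with
  | zero =>
    obtain rfl : k = 0 := Nat.le_zero.1 hk
    simp [cornerMinor]
  | succ m ih =>
    cases k with
    | zero => simp [cornerMinor]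
    | succ k =>
      rw [cornerMinor_succ (Nat.le_of_succ_le_succ hk) fun i => (hu.1 i).ne']
      exact mul_pos (hu.1 _) (ih hu.2 (Nat.le_of_succ_le_succ hk))

lemma IsUniUpper.mem_Sset_of_mem_peelPos {u : Matrix (Fin d) (Fin d) ℝ} (hU : IsUniUpper d u)
    (hu : u ∈ peelPos d) : u ∈ Sset d :=
  ⟨hU, fun _ _ hk => (cornerMinor_pos_of_mem_peelPos hu (hk.trans (Nat.sub_le d 1))).ne'⟩

lemma IsUniUpper.nonneg_of_mem_peelPos {u : Matrix (Fin d) (Fin d) ℝ} (hU : IsUniUpper d u)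
    (hu : u ∈ peelPos d) (i j : Fin d) : 0 ≤ u i j := by
  induction d with
  | zero => exact i.elim0
  | succ m ih =>
    cases j using Fin.lastCases with
    | last => exact (hu.1 i).le
    | cast j =>
      induction i using Fin.reverseInduction with
      | last => exact (hU.1 _ _ j.isLt).ge
      | cast i hi =>
        have hpeel := ih hU.peel hu.2 i j
        have hratio : 0 ≤ lastColRatio u i := (div_pos (hu.1 _) (hu.1 _)).le
        rw [peel_apply] at hpeel
        linarith [mul_nonneg hratio hi]

end Positivity

section Closure

variable {m d : ℕ}

lemma apply_zero_last_ne_zero_of_mem_Sset {u : Matrix (Fin (m + 1)) (Fin (m + 1)) ℝ}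
    (hu : u ∈ Sset (m + 1)) : u 0 (Fin.last m) ≠ 0 := by
  cases m with
  | zero => exact (hu.1.2 0).trans_ne one_ne_zero
  | succ m => exact cornerMinor_one u ▸ hu.2 1 le_rfl (Nat.le_add_left 1 m)

lemma peel_mem_Sset {u : Matrix (Fin (m + 1)) (Fin (m + 1)) ℝ} (hu : u ∈ Sset (m + 1))
    (hcol : ∀ i, u i (Fin.last m) ≠ 0) : peel u ∈ Sset m := by
  refine ⟨hu.1.peel, fun k hk hkm => ?_⟩
  have hminor := hu.2 (k + 1) (by omega) (by omega)
  rw [cornerMinor_succ (by omega) hcol] at hminor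
  exact right_ne_zero_of_mul hminor

lemma IsUniUpper.last_col_le_of_mem_peelPos {u : Matrix (Fin (m + 1)) (Fin (m + 1)) ℝ}
    (hU : IsUniUpper (m + 1) u) (hu : u ∈ peelPos (m + 1)) (i : Fin m) :
    u i.castSucc (Fin.last m) ≤ u i.castSucc i.succ * u i.succ (Fin.last m) := by
  rcases Fin.eq_castSucc_or_eq_last i.succ with ⟨j, hj⟩ | hlast
  · have hpeel := hU.peel.nonneg_of_mem_peelPos hu.2 i j
    rwa [peel_apply, ← hj, hU.2, mul_one, sub_nonneg, lastColRatio, div_le_iff₀ (hu.1 _)] at hpeel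
  · rw [hlast, hU.2, mul_one]

lemma mem_lastColPos_of_mem_closure {u : Matrix (Fin (m + 1)) (Fin (m + 1)) ℝ}
    (hcl : u ∈ closure (peelPos (m + 1) ∩ {u | IsUniUpper (m + 1) u})) (hu : u ∈ Sset (m + 1)) :
    u ∈ lastColPos m := by
  have hentry (i j : Fin (m + 1)) :
      Continuous fun w : Matrix (Fin (m + 1)) (Fin (m + 1)) ℝ => w i j :=
    continuous_id.matrix_elem i j
  have hnonneg (i : Fin (m + 1)) : 0 ≤ u i (Fin.last m) :=
    le_on_closure (fun w hw => (hw.1.1 i).le) continuousOn_const (hentry _ _).continuousOn hcl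
  have hle (i : Fin m) :
      u i.castSucc (Fin.last m) ≤ u i.castSucc i.succ * u i.succ (Fin.last m) :=
    le_on_closure (fun w hw => hw.2.last_col_le_of_mem_peelPos hw.1 i) (hentry _ _).continuousOn
      ((hentry _ _).mul (hentry _ _)).continuousOn hcl
  intro i
  induction i using Fin.induction with
  | zero => exact (hnonneg 0).lt_of_ne' (apply_zero_last_ne_zero_of_mem_Sset hu)
  | succ i ih =>
    refine (hnonneg _).lt_of_ne' fun hzero => ih.not_ge ?_
    simpa only [hzero, mul_zero] using hle i

lemma closure_peelPos_inter_Sset_subset (d : ℕ) :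
    closure (peelPos d ∩ {u | IsUniUpper d u}) ∩ Sset d ⊆ peelPos d := by
  induction d with
  | zero => exact Set.subset_univ _
  | succ m ih =>
    rintro u ⟨hcl, hu⟩
    have hpos : u ∈ lastColPos m := mem_lastColPos_of_mem_closure hcl hu
    have hcont : ContinuousAt peel u :=
      (continuousOn_peel_lastColPos m).continuousAt ((isOpen_lastColPos m).mem_nhds hpos)
    have himage : Set.image peel (peelPos (m + 1) ∩ {u | IsUniUpper (m + 1) u}) ⊆
        peelPos m ∩ {u | IsUniUpper m u} := by
      rintro _ ⟨w, ⟨hw, hwU⟩, rfl⟩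
      exact ⟨hw.2, hwU.peel⟩
    exact ⟨hpos, ih ⟨closure_mono himage (mem_closure_image hcont hcl),
      peel_mem_Sset hu fun i => (hpos i).ne'⟩⟩

lemma connectedComponentIn_Sset_subset_peelPos {u : Matrix (Fin d) (Fin d) ℝ}
    (hU : IsUniUpper d u) (hu : u ∈ peelPos d) :
    connectedComponentIn (Sset d) u ⊆ peelPos d := by
  have hsub := connectedComponentIn_subset (Sset d) u
  refine subset_of_isPreconnected_of_closure_inter_subset isPreconnected_connectedComponentIn
    (isOpen_peelPos d)
    ⟨u, mem_connectedComponentIn (hU.mem_Sset_of_mem_peelPos hu), hu⟩ ?_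
  refine Set.Subset.trans (Set.inter_subset_inter (closure_mono ?_) hsub)
    (closure_peelPos_inter_Sset_subset d)
  exact fun w hw => ⟨hw.2, (hsub hw.1).1⟩

end Closure

section Parametrization

lemma isUniUpper_one_add_smul_elemE (d i : ℕ) (x : ℝ) : IsUniUpper d (1 + x • elemE d i) := by
  refine ⟨fun a b hab => ?_, fun a => ?_⟩
  · have hE : elemE d i a b = 0 := if_neg (by omega)
    rw [Matrix.add_apply, Matrix.smul_apply, Matrix.one_apply_ne (Fin.ne_of_gt hab), hE, smul_zero,
      add_zero]
  · have hE : elemE d i a a = 0 := if_neg (by omega)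
    rw [Matrix.add_apply, Matrix.smul_apply, Matrix.one_apply_eq, hE, smul_zero, add_zero]

lemma isUniUpper_uProd (n : ℕ) (t : ℕ → ℕ → ℝ) : IsUniUpper (n + 1) (uProd n t) := by
  refine (uniUpperSubmonoid (n + 1)).list_prod_mem (List.forall_mem_map.2 fun m _ => ?_)
  refine (uniUpperSubmonoid (n + 1)).list_prod_mem (List.forall_mem_map.2 fun i _ => ?_)
  exact isUniUpper_one_add_smul_elemE _ _ _

lemma continuous_uProd (n : ℕ) : Continuous (uProd n) := by
  unfold uProd blockB
  refine continuous_list_prod _ fun m _ => continuous_list_prod _ fun i _ => ?_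
  fun_prop

lemma elemE_mul_elemE_eq_zero (d : ℕ) {i j : ℕ} (hji : j ≤ i) : elemE d i * elemE d j = 0 := by
  ext a b
  rw [Matrix.mul_apply]
  refine Finset.sum_eq_zero fun k _ => ?_
  simp only [elemE, Matrix.of_apply, mul_ite, mul_one, mul_zero, ite_eq_right_iff]
  omega

lemma sum_smul_elemE (m : ℕ) (c : ℕ → ℝ) :
    ∑ l ∈ Finset.range m, c l • elemE (m + 1) (l + 1) = superdiag fun i : Fin m => c i := by
  rw [Finset.sum_range]
  ext a b
  cases a using Fin.lastCases with
  | last =>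
    have hlast (l : Fin m) : ¬(m = l ∧ (b : ℕ) = l + 1) := by omega
    simp [Matrix.sum_apply, elemE, hlast]
  | cast a =>
    rw [Matrix.sum_apply, Finset.sum_eq_single a _ (by simp)]
    · simp [elemE, Fin.ext_iff]
    · intro l _ hl
      simp [elemE, Fin.val_ne_of_ne hl.symm]

lemma one_sub_superdiag_mul_blockB (n : ℕ) (t : ℕ → ℕ → ℝ) :
    (1 - superdiag fun i : Fin n => t (i + 1) (n - i)) * blockB n t n = 1 := by
  rw [← sum_smul_elemE n fun l => t (l + 1) (n - l)]
  refine one_sub_sum_mul_prod_one_add _ (fun i j hji => ?_) n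
  rw [smul_mul_smul_comm, elemE_mul_elemE_eq_zero _ (Nat.succ_le_succ hji), smul_zero]

lemma diagOne_one_add_smul_elemE {d i : ℕ} (hi : i < d) (x : ℝ) :
    diagOne (1 + x • elemE d i) = 1 + x • elemE (d + 1) i := by
  ext a b
  cases a using Fin.lastCases <;> cases b using Fin.lastCases <;>
    simp [elemE, Matrix.one_apply, (Fin.castSucc_lt_last _).ne, (Fin.castSucc_lt_last _).ne'] <;>
    omega

lemma diagOne_blockB {n m : ℕ} (hm : m ≤ n) (t : ℕ → ℕ → ℝ) :
    diagOne (blockB n t m) = blockB (n + 1) t m := by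
  rw [blockB, blockB, map_list_prod, List.map_map]
  congr 1
  refine List.map_congr_left fun i hi => diagOne_one_add_smul_elemE ?_ _
  have := List.mem_range.1 hi
  omega

lemma uProd_succ (n : ℕ) (t : ℕ → ℕ → ℝ) :
    uProd (n + 1) t = blockB (n + 1) t (n + 1) * diagOne (uProd n t) := by
  rw [uProd, uProd, map_list_prod, List.map_map, List.range_succ_eq_map, List.map_cons,
    List.prod_cons, List.map_map, Nat.sub_zero]
  congr 2
  refine List.map_congr_left fun m _ => ?_
  simp [diagOne_blockB]

/-- The parameters `t` whose entries `t i j` with `1 ≤ i ≤ n` and `1 ≤ j ≤ n + 1 - i` are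
positive; the remaining entries do not enter `uProd n t`. -/
def posParams (n : ℕ) : Set (ℕ → ℕ → ℝ) :=
  {t | ∀ i j : ℕ, 1 ≤ i → i ≤ n → 1 ≤ j → j ≤ n + 1 - i → 0 < t i j}

lemma convex_posParams (n : ℕ) : Convex ℝ (posParams n) :=
  fun _ ht _ hs _ _ ha hb hab i j hi hin hj hjn =>
    convex_Ioi (0 : ℝ) (ht i j hi hin hj hjn) (hs i j hi hin hj hjn) ha hb hab

lemma uProd_mem_peelPos {n : ℕ} {t : ℕ → ℕ → ℝ} (ht : t ∈ posParams n) :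
    uProd n t ∈ peelPos (n + 1) := by
  induction n with
  | zero =>
    refine ⟨fun i => ?_, trivial⟩
    rw [Fin.fin_one_eq_zero i, Fin.last_zero, (isUniUpper_uProd 0 t).2]
    exact one_pos
  | succ n ih =>
    have ht' : t ∈ posParams n := fun i j hi hin hj hjn =>
      ht i j hi (by omega) hj (by omega)
    have hB := one_sub_superdiag_mul_blockB (n + 1) t
    have hcol := last_col_pos_of_one_sub_superdiag_mul_eq_one
      (fun i => ht _ _ (by omega) (by omega) (by omega) (by omega)) hB
    rw [uProd_succ]
    refine ⟨fun i => ?_, ?_⟩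
    · rw [mul_diagOne_apply_last]
      exact hcol i
    · rw [Set.mem_preimage, peel_mul_diagOne hB fun i => (hcol i.succ).ne']
      exact ih ht'

lemma uProd_mem_Sset {n : ℕ} {t : ℕ → ℕ → ℝ} (ht : t ∈ posParams n) : uProd n t ∈ Sset (n + 1) :=
  (isUniUpper_uProd n t).mem_Sset_of_mem_peelPos (uProd_mem_peelPos ht)

lemma uProd_mem_connectedComponentIn {n : ℕ} {t s : ℕ → ℕ → ℝ} (ht : t ∈ posParams n)
    (hs : s ∈ posParams n) : uProd n s ∈ connectedComponentIn (Sset (n + 1)) (uProd n t) := by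
  have hconn : IsPreconnected (Set.image (uProd n) (posParams n)) :=
    (convex_posParams n).isPreconnected.image _ (continuous_uProd n).continuousOn
  exact hconn.subset_connectedComponentIn (Set.mem_image_of_mem _ ht)
    (Set.image_subset_iff.2 fun _ => uProd_mem_Sset) (Set.mem_image_of_mem _ hs)

end Parametrization

lemma mul_ne_one_of_mem_peelPos {n : ℕ} (hn : 1 ≤ n) {u v : Matrix (Fin (n + 1)) (Fin (n + 1)) ℝ}
    (hU : IsUniUpper (n + 1) u) (hu : u ∈ peelPos (n + 1)) (hV : IsUniUpper (n + 1) v)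
    (hv : v ∈ peelPos (n + 1)) : u * v ≠ 1 := by
  intro huv
  have hpos : 0 < (u * v) 0 (Fin.last n) :=
    mul_apply_pos (hU.nonneg_of_mem_peelPos hu 0)
      (fun k => hV.nonneg_of_mem_peelPos hv k (Fin.last n)) (hU.2 0 ▸ one_pos) (hv.1 0)
  have hne : (0 : Fin (n + 1)) ≠ Fin.last n := Fin.ne_of_lt hn
  rw [huv, Matrix.one_apply_ne hne] at hpos
  exact hpos.false

/-- Here `d = n + 1` with `n ≥ 1`, so `d ≥ 2` is arbitrary. -/
theorem totally_positive_component_not_inversion_invariant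
    (n : ℕ) (hn : 1 ≤ n) (t s : ℕ → ℕ → ℝ)
    (ht : ∀ i j : ℕ, 1 ≤ i → i ≤ n → 1 ≤ j → j ≤ n + 1 - i → 0 < t i j)
    (hs : ∀ i j : ℕ, 1 ≤ i → i ≤ n → 1 ≤ j → j ≤ n + 1 - i → 0 < s i j) :
    uProd n t ∈ Sset (n + 1) ∧ uProd n s ∈ Sset (n + 1) ∧
    uProd n s ∈ connectedComponentIn (Sset (n + 1)) (uProd n t) ∧
    (uProd n t)⁻¹ ∉ connectedComponentIn (Sset (n + 1)) (uProd n s) := by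
  have hinv_notMem : (uProd n t)⁻¹ ∉ connectedComponentIn (Sset (n + 1)) (uProd n s) := by
    intro hinv
    have hinvU : IsUniUpper (n + 1) (uProd n t)⁻¹ := (connectedComponentIn_subset _ _ hinv).1
    have hinvPos : (uProd n t)⁻¹ ∈ peelPos (n + 1) :=
      connectedComponentIn_Sset_subset_peelPos (isUniUpper_uProd n s) (uProd_mem_peelPos hs) hinv
    exact mul_ne_one_of_mem_peelPos hn (isUniUpper_uProd n t) (uProd_mem_peelPos ht) hinvU hinvPos
      (isUniUpper_uProd n t).mul_inv_eq_one
  exact ⟨uProd_mem_Sset ht, uProd_mem_Sset hs, uProd_mem_connectedComponentIn ht hs, hinv_notMem⟩
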